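/- arXiv:2206.09525 — 2 statements merged into one kernel-verified Lean document; each statement's English description precedes it below -/
import Mathlib

section
/- Let n ≥ 2 and m ≥ 0 be integers, and let r₀, r₁, …, r_n be nonnegative integers with r_n = 0, r_{n−1} = m and r_ℓ ≥ 2·r_{ℓ+1} for ℓ = n−2, …, 0. Let k ≥ 2r₀ + 1. Define, for each vertex v ∈ {0,…,n}, S₀({v}) = D({v}, r₀); for 1 ≤ ℓ ≤ n−1 and each subset f of {0,…,n} with |f| = ℓ+1, S_ℓ(f) = D(f, r_ℓ) \ ⋃_{i=0}^{ℓ−1} ⋃_{e ⊆ f, |e| = i+1} D(e, r_i); and S_n = 𝕋ⁿ_k \ ⋃_{i=0}^{n−1} ⋃_{f ⊆ {0,…,n}, |f| = i+1} D(f, r_i). Then the sets S_ℓ(f), ranging over ℓ = 0,…,n−1 and all subsets f with |f| = ℓ+1, together with S_n, are pairwise disjoint and their union is all of 𝕋ⁿ_k. -/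
open scoped BigOperators

/-- The lattice tube `D(f, s)` inside the simplicial lattice `𝕋ⁿ_k`. -/
def latticeTube (n k : ℕ) (f : Finset (Fin (n + 1))) (s : ℕ) : Set (Fin (n + 1) → ℕ) :=
  {α | ∑ i, α i = k ∧ ∑ i ∈ fᶜ, α i ≤ s}

/-- The decomposition sets `S_ℓ(f) = D(f, r_ℓ) \ ⋃_{i<ℓ} ⋃_{e ⊆ f, |e| = i+1} D(e, r_i)`
(for `ℓ = 0` the union is empty, so `S₀({v}) = D({v}, r₀)`). -/
def latticeS (n k : ℕ) (r : ℕ → ℕ) (l : ℕ) (f : Finset (Fin (n + 1))) :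
    Set (Fin (n + 1) → ℕ) :=
  latticeTube n k f (r l) \
    ⋃ i < l, ⋃ e ∈ {e : Finset (Fin (n + 1)) | e ⊆ f ∧ e.card = i + 1},
      latticeTube n k e (r i)

/-- The interior set `S_n = 𝕋ⁿ_k \ ⋃_{i<n} ⋃_{|f| = i+1} D(f, r_i)`. -/
def latticeSTop (n k : ℕ) (r : ℕ → ℕ) : Set (Fin (n + 1) → ℕ) :=
  {α | ∑ i, α i = k} \
    ⋃ i < n, ⋃ f ∈ {f : Finset (Fin (n + 1)) | f.card = i + 1}, latticeTube n k f (r i)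

/-!
For a lattice point `α`, consider the proper faces `f` whose tube `D(f, r_{|f|-1})` contains `α`.
Since `dist(α, f ∩ g) ≤ dist(α, f) + dist(α, g)`, the halving of the radii makes this family closed
under intersection, and `2 r₀ < k` keeps the intersections nonempty. Hence a minimal member is a
least one, and in particular unique. As `α ∈ S_ℓ(f)` says that `f` is a minimal member and
`α ∈ S_n` that there is no member at all, exactly one of these sets contains `α`.
-/

lemma sum_compl_inter_le {ι M : Type*} [Fintype ι] [DecidableEq ι] [AddCommMonoid M]
    [PartialOrder M] [CanonicallyOrderedAdd M] (α : ι → M) (f g : Finset ι) :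
    ∑ i ∈ (f ∩ g)ᶜ, α i ≤ ∑ i ∈ fᶜ, α i + ∑ i ∈ gᶜ, α i := by
  rw [Finset.compl_inter, ← Finset.sum_union_inter]
  exact le_self_add

lemma antitoneOn_Iio_of_two_mul_le {n : ℕ} {r : ℕ → ℕ}
    (hr : ∀ l, l + 1 < n → 2 * r (l + 1) ≤ r l) : AntitoneOn r (Set.Iio n) :=
  antitoneOn_of_add_one_le Set.ordConnected_Iio fun l _ _ hl =>
    (Nat.le_mul_of_pos_left _ two_pos).trans (hr l hl)

section Tubes

variable {n k s t : ℕ} {f g : Finset (Fin (n + 1))} {α : Fin (n + 1) → ℕ}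

lemma latticeTube_mono (f : Finset (Fin (n + 1))) (hst : s ≤ t) :
    latticeTube n k f s ⊆ latticeTube n k f t :=
  fun _ hα => ⟨hα.1, hα.2.trans hst⟩

lemma latticeTube_inter_subset :
    latticeTube n k f s ∩ latticeTube n k g t ⊆ latticeTube n k (f ∩ g) (s + t) :=
  fun α ⟨hf, hg⟩ => ⟨hf.1, (sum_compl_inter_le α f g).trans (add_le_add hf.2 hg.2)⟩

lemma nonempty_of_mem_latticeTube (hs : s < k) (hα : α ∈ latticeTube n k f s) : f.Nonempty := by
  rw [Finset.nonempty_iff_ne_empty]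
  rintro rfl
  obtain ⟨hsum, hle⟩ := hα
  rw [Finset.compl_empty, hsum] at hle
  exact hle.not_gt hs

end Tubes

/-- The proper faces `f` whose tube `D(f, r_{|f|-1})` contains the point `α`. The dimension `l` of a
face is quantified instead of being written as `f.card - 1`, which excludes the empty face. -/
def tubeFaces (n k : ℕ) (r : ℕ → ℕ) (α : Fin (n + 1) → ℕ) : Set (Finset (Fin (n + 1))) :=
  {f | ∃ l < n, f.card = l + 1 ∧ α ∈ latticeTube n k f (r l)}

section Decomposition

variable {n k l : ℕ} {r : ℕ → ℕ} {f : Finset (Fin (n + 1))} {α : Fin (n + 1) → ℕ}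

lemma mem_tubeFaces_iff_mem_latticeTube (hl : l < n) (hf : f.card = l + 1) :
    f ∈ tubeFaces n k r α ↔ α ∈ latticeTube n k f (r l) := by
  constructor
  · rintro ⟨l', -, hf', hα⟩
    obtain rfl : l = l' := Nat.succ_injective (hf.symm.trans hf')
    exact hα
  · exact fun hα => ⟨l, hl, hf, hα⟩

lemma mem_latticeS_iff_minimal (hl : l < n) (hf : f.card = l + 1) :
    α ∈ latticeS n k r l f ↔ Minimal (· ∈ tubeFaces n k r α) f := by
  rw [minimal_iff_forall_lt, mem_tubeFaces_iff_mem_latticeTube hl hf]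
  simp only [latticeS, Set.mem_sdiff, Set.mem_iUnion, Set.mem_ofPred_eq, not_exists]
  refine and_congr_right fun _ => ⟨?_, ?_⟩
  · rintro hα e he ⟨i, -, hei, hαe⟩
    have hcard : e.card < f.card := Finset.card_lt_card he
    exact hα i (by omega) e ⟨he.subset, hei⟩ hαe
  · rintro hα i hi e ⟨hef, hei⟩ hαe
    have hne : e ≠ f := by
      rintro rfl
      omega
    exact hα (hef.ssubset_of_ne hne) ⟨i, hi.trans hl, hei, hαe⟩

lemma latticeS_subset_lattice : latticeS n k r l f ⊆ {α | ∑ i, α i = k} :=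
  fun _ hα => hα.1.1

lemma mem_latticeSTop_iff :
    α ∈ latticeSTop n k r ↔ ∑ i, α i = k ∧ tubeFaces n k r α = ∅ := by
  simp only [latticeSTop, tubeFaces, Set.mem_sdiff, Set.mem_iUnion, Set.mem_ofPred_eq, exists_prop,
    Set.eq_empty_iff_forall_notMem, not_exists, not_and]
  exact and_congr_right fun _ => ⟨fun h f l hl => h l hl f, fun h l hl f => h f l hl⟩

lemma exists_mem_latticeS_of_tubeFaces_nonempty (h : (tubeFaces n k r α).Nonempty) :
    ∃ l < n, ∃ f : Finset (Fin (n + 1)), f.card = l + 1 ∧ α ∈ latticeS n k r l f := by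
  obtain ⟨f, hmin⟩ := (tubeFaces n k r α).toFinite.exists_minimal h
  obtain ⟨l, hl, hf, -⟩ := hmin.prop
  exact ⟨l, hl, f, hf, (mem_latticeS_iff_minimal hl hf).mpr hmin⟩

lemma disjoint_latticeS_latticeSTop (hl : l < n) (hf : f.card = l + 1) :
    Disjoint (latticeS n k r l f) (latticeSTop n k r) := by
  rw [Set.disjoint_left]
  intro α hα hTop
  have hmem : f ∈ tubeFaces n k r α := ((mem_latticeS_iff_minimal hl hf).mp hα).prop
  rwa [(mem_latticeSTop_iff.mp hTop).2] at hmem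

theorem infClosed_tubeFaces (hr : ∀ l, l + 1 < n → 2 * r (l + 1) ≤ r l) (hk : 2 * r 0 < k) :
    InfClosed (tubeFaces n k r α) := by
  have anti := antitoneOn_Iio_of_two_mul_le hr
  rintro f ⟨l, hl, hf, hαf⟩ g ⟨m, hm, hg, hαg⟩
  wlog hlm : l ≤ m generalizing f g l m
  · rw [inf_comm]
    exact this m hm hg hαg l hl hf hαf (le_of_not_ge hlm)
  by_cases hfg : f ⊆ g
  · rw [inf_eq_left.mpr hfg]
    exact ⟨l, hl, hf, hαf⟩
  have hα : α ∈ latticeTube n k (f ∩ g) (2 * r l) := by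
    refine latticeTube_mono _ ?_ (latticeTube_inter_subset ⟨hαf, hαg⟩)
    have : r m ≤ r l := anti hl hm hlm
    omega
  have hlk : 2 * r l < k := by
    have : r l ≤ r 0 := anti (l.zero_le.trans_lt hl) hl l.zero_le
    omega
  obtain ⟨i, hi⟩ := Nat.exists_eq_add_one.mpr
    (Finset.card_pos.mpr (nonempty_of_mem_latticeTube hlk hα))
  have hil : i < l := by
    have : (f ∩ g).card < f.card := Finset.card_lt_card (inf_lt_left.mpr hfg)
    omega
  have hin : i + 1 < n := Nat.lt_of_le_of_lt hil hl
  have hri : 2 * r l ≤ r i := calc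
    2 * r l ≤ 2 * r (i + 1) := Nat.mul_le_mul_left 2 (anti hin hl hil)
    _ ≤ r i := hr i hin
  exact ⟨i, hil.trans hl, hi, latticeTube_mono _ hri hα⟩

lemma mem_latticeS_iff_isLeast (hr : ∀ l, l + 1 < n → 2 * r (l + 1) ≤ r l) (hk : 2 * r 0 < k)
    (hl : l < n) (hf : f.card = l + 1) :
    α ∈ latticeS n k r l f ↔ IsLeast (tubeFaces n k r α) f :=
  (mem_latticeS_iff_minimal hl hf).trans
    (infClosed_tubeFaces hr hk).codirectedOn.minimal_iff_isLeast

end Decomposition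

/-- the sets `S_ℓ(f)` (`ℓ = 0,…,n−1`, `|f| = ℓ+1`) together with `S_n` are
pairwise disjoint and their union is the whole simplicial lattice `𝕋ⁿ_k`. -/
theorem lattice_decomposition
    (n : ℕ) (hn : 2 ≤ n) (m : ℕ) (r : ℕ → ℕ)
    (hrn : r n = 0) (hrn1 : r (n - 1) = m)
    (hrdec : ∀ l, l ≤ n - 2 → 2 * r (l + 1) ≤ r l)
    (k : ℕ) (hk : 2 * r 0 + 1 ≤ k) :
    (∀ l₁ l₂ : ℕ, l₁ ≤ n - 1 → l₂ ≤ n - 1 →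
      ∀ f₁ f₂ : Finset (Fin (n + 1)), f₁.card = l₁ + 1 → f₂.card = l₂ + 1 →
        (l₁, f₁) ≠ (l₂, f₂) →
        Disjoint (latticeS n k r l₁ f₁) (latticeS n k r l₂ f₂)) ∧
    (∀ l ≤ n - 1, ∀ f : Finset (Fin (n + 1)), f.card = l + 1 →
        Disjoint (latticeS n k r l f) (latticeSTop n k r)) ∧
    ((⋃ l ≤ n - 1, ⋃ f ∈ {f : Finset (Fin (n + 1)) | f.card = l + 1}, latticeS n k r l f)
        ∪ latticeSTop n k r
      = {α : Fin (n + 1) → ℕ | ∑ i, α i = k}) := by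
  have hr : ∀ l, l + 1 < n → 2 * r (l + 1) ≤ r l := fun l hl => hrdec l (by omega)
  have hlt : ∀ {l}, l ≤ n - 1 → l < n := by omega
  refine ⟨fun l₁ l₂ hl₁ hl₂ f₁ f₂ hf₁ hf₂ hne => Set.disjoint_left.mpr fun α h₁ h₂ => ?_,
    fun l hl f hf => disjoint_latticeS_latticeSTop (hlt hl) hf, Set.Subset.antisymm ?_ ?_⟩
  · rw [mem_latticeS_iff_isLeast hr hk (hlt hl₁) hf₁] at h₁
    rw [mem_latticeS_iff_isLeast hr hk (hlt hl₂) hf₂] at h₂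
    obtain rfl : f₁ = f₂ := h₁.unique h₂
    obtain rfl : l₁ = l₂ := Nat.succ_injective (hf₁.symm.trans hf₂)
    exact hne rfl
  · exact Set.union_subset (Set.iUnion₂_subset fun _ _ => Set.iUnion₂_subset fun _ _ =>
      latticeS_subset_lattice) Set.sdiff_subset
  · intro α hα
    rcases (tubeFaces n k r α).eq_empty_or_nonempty with hempty | hne
    · exact Or.inr (mem_latticeSTop_iff.mpr ⟨hα, hempty⟩)
    · obtain ⟨l, hl, f, hf, hαf⟩ := exists_mem_latticeS_of_tubeFaces_nonempty hne
      exact Or.inl (Set.mem_iUnion₂_of_mem (Nat.le_sub_one_of_lt hl)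
        (Set.mem_iUnion₂_of_mem hf hαf))
end

section
/- Let T ⊂ ℝ³ be a tetrahedron with affinely independent vertices v₀, v₁, v₂, v₃. Let r₂ = (r^v, r^e, r^f) be integers with r^f ≥ 0, r^e ≥ 2r^f + 1, r^v ≥ 2r^e, and let k ≥ 2r^v + 1; set r₃ = (r^v−1, r^e−1, r^f−1). Assume S₃(T, r₃, k−1) is nonempty. Then {div u : u = (u₁,u₂,u₃) with each component u_i ∈ B_k(T; r₂)} = {p ∈ B_{k−1}(T; r₃) : ∫_T p dx = 0}. That is, div 𝔹_k³(T; r₂) = 𝔹_{k−1}(T; r₃)/ℝ. -/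
open scoped BigOperators
open MeasureTheory

/-- The interior lattice set `S₃(T, r, k)` for a smoothness vector `r = (rᵛ, rᵉ, r^f)`:
lattice nodes of `𝕋³_k` whose distance to every sub-simplex exceeds the corresponding
smoothness parameter (vertices: `rᵛ`, edges: `rᵉ`, faces: `r^f`). -/
def interiorLattice (k : ℕ) (rv re rf : ℤ) : Set (Fin 4 → ℕ) :=
  {α | ∑ i, α i = k ∧ ∀ f : Finset (Fin 4), f.Nonempty → f ≠ Finset.univ →
    ((f.card = 1 → rv < ∑ i ∈ fᶜ, (α i : ℤ)) ∧
     (f.card = 2 → re < ∑ i ∈ fᶜ, (α i : ℤ)) ∧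
     (f.card = 3 → rf < ∑ i ∈ fᶜ, (α i : ℤ)))}

/-- The Bernstein monomial `λ^α` on `ℝ³`. -/
def bernBary3 (lam : Fin 4 → ((Fin 3 → ℝ) →ᵃ[ℝ] ℝ)) (α : Fin 4 → ℕ) :
    (Fin 3 → ℝ) → ℝ :=
  fun x => ∏ i, (lam i x) ^ (α i)

/-- The bubble space `B_k(T; r) = span{λ^α : α ∈ S₃(T, r, k)}`. -/
def bubbleSpace (lam : Fin 4 → ((Fin 3 → ℝ) →ᵃ[ℝ] ℝ)) (k : ℕ) (rv re rf : ℤ) :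
    Submodule ℝ ((Fin 3 → ℝ) → ℝ) :=
  Submodule.span ℝ (bernBary3 lam '' interiorLattice k rv re rf)

/-- The divergence `div u = ∂₁u₁ + ∂₂u₂ + ∂₃u₃` of a vector field on `ℝ³`. -/
noncomputable def diverg (u : (Fin 3 → ℝ) → (Fin 3 → ℝ)) : (Fin 3 → ℝ) → ℝ :=
  fun x => ∑ m, fderiv ℝ (fun y => u y m) x (Pi.single m 1)

/-!
With the normalisation `λ ^ α / α!`, the derivative along an edge `v i - v j` of a Bernstein
monomial is the difference of the monomials with indices `α - e i` and `α - e j`. So, modulo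
divergences of bubble fields, two monomials of degree `k - 1` agree as soon as their indices arise
by lowering different entries of one node of degree `k`. Moving a unit from a larger entry of a
node to a smaller one does not leave the interior lattice, and such moves connect all nodes of
degree `k`; raising the smallest entry of a node of degree `k - 1` gives a node of degree `k`.
Hence the divergences have codimension at most one. A bubble function vanishes on the boundary, so
divergences have zero mean, while monomials have positive mean: the integral accounts for the
missing dimension.
-/

section MultiIndex

variable {ι : Type*}

theorem exists_lt_of_sum_eq_of_ne [Fintype ι] {α β : ι → ℕ}
    (hsum : ∑ l, α l = ∑ l, β l) (hne : α ≠ β) : ∃ i, β i < α i := by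
  by_contra! hle
  exact hne (funext fun i =>
    (Finset.sum_eq_sum_iff_of_le fun l _ => hle l).1 hsum i (Finset.mem_univ i))

variable [DecidableEq ι]

theorem sub_single_add_single {α : ι → ℕ} {i : ι} (hi : 0 < α i) :
    α - Pi.single i 1 + Pi.single i 1 = α := by
  refine tsub_add_cancel_of_le fun j => ?_
  rcases eq_or_ne j i with rfl | hj
  · rwa [Pi.single_eq_same]
  · simp [hj]

theorem sum_add_single (β : ι → ℕ) (i : ι) (s : Finset ι) :
    ∑ l ∈ s, (β + Pi.single i 1 : ι → ℕ) l = ∑ l ∈ s, β l + if i ∈ s then 1 else 0 := by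
  simp only [Pi.add_apply, Finset.sum_add_distrib, Finset.sum_pi_single']

theorem card_mul_sum_insert_le {β : ι → ℕ} {i : ι} (hi : ∀ j, β i ≤ β j) {s : Finset ι}
    (his : i ∉ s) :
    s.card * ∑ l ∈ insert i s, β l ≤ (s.card + 1) * ∑ l ∈ s, β l := by
  have hmin : s.card * β i ≤ ∑ l ∈ s, β l := Finset.card_nsmul_le_sum s β _ fun l _ => hi l
  rw [Finset.sum_insert his]
  linarith

/-- Closure of a set of multi-indices under moving one unit from an entry to a smaller one. -/
def BalancingClosed (S : Set (ι → ℕ)) : Prop :=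
  ∀ α ∈ S, ∀ i j, α j < α i → α - Pi.single i 1 + Pi.single j 1 ∈ S

variable [Fintype ι] {α β : ι → ℕ}

theorem sum_transfer {i : ι} (hi : 0 < α i) (j : ι) :
    ∑ l, (α - Pi.single i 1 + Pi.single j 1 : ι → ℕ) l = ∑ l, α l := by
  conv_rhs => rw [← sub_single_add_single hi]
  simp only [sum_add_single, Finset.mem_univ]

theorem sum_dist_transfer_lt {i j : ι} (hi : β i < α i) (hj : α j < β j) :
    ∑ l, Nat.dist ((α - Pi.single i 1 + Pi.single j 1 : ι → ℕ) l) (β l) <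
      ∑ l, Nat.dist (α l) (β l) := by
  have hij : i ≠ j := by rintro rfl; exact lt_asymm hi hj
  refine Finset.sum_lt_sum (fun l _ => ?_) ⟨i, Finset.mem_univ i, ?_⟩ <;>
    simp only [Nat.dist, Pi.add_apply, Pi.sub_apply, Pi.single_apply] <;>
    grind

/-- Two distinct nodes can always be brought closer to each other by a balancing move, which takes a
unit from `a` to `b` in `α` or from `b` to `a` in `β`. -/
theorem BalancingClosed.apply_sub_single_eq {S : Set (ι → ℕ)} (hS : BalancingClosed S)
    {X : Type*} {g : (ι → ℕ) → X}
    (hg : ∀ α ∈ S, ∀ i j, g (α - Pi.single i 1) = g (α - Pi.single j 1))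
    (hα : α ∈ S) (hβ : β ∈ S) (hsum : ∑ l, α l = ∑ l, β l) (i j : ι) :
    g (α - Pi.single i 1) = g (β - Pi.single j 1) := by
  induction hn : ∑ l, Nat.dist (α l) (β l) using Nat.strong_induction_on
    generalizing α β i j with
  | _ n ih =>
    subst hn
    rcases eq_or_ne α β with rfl | hne
    · exact hg α hα i j
    obtain ⟨a, ha⟩ := exists_lt_of_sum_eq_of_ne hsum hne
    obtain ⟨b, hb⟩ := exists_lt_of_sum_eq_of_ne hsum.symm hne.symm
    rcases lt_or_ge (α b) (α a) with hab | hab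
    · have step := ih _ (sum_dist_transfer_lt ha hb) (hS α hα a b hab) hβ
        ((sum_transfer (by omega) b).trans hsum) b j rfl
      rw [add_tsub_cancel_right] at step
      exact (hg α hα i a).trans step
    · have hlt : ∑ l, Nat.dist (α l) ((β - Pi.single b 1 + Pi.single a 1 : ι → ℕ) l) <
          ∑ l, Nat.dist (α l) (β l) := by
        simpa only [Nat.dist_comm] using sum_dist_transfer_lt hb ha
      have step := ih _ hlt hα (hS β hβ b a (by omega))
        (hsum.trans (sum_transfer (by omega) a).symm) i a rfl
      rw [add_tsub_cancel_right] at step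
      exact step.trans (hg β hβ b j)

end MultiIndex

section BubbleNodes

variable {ι : Type*} [Fintype ι] {k : ℕ} {r : ℕ → ℤ} {α β : ι → ℕ}

/-- The nodes of degree `k` of the simplicial lattice of a simplex of any dimension whose lattice
distance to each proper face of codimension `m` exceeds `r m`. The face on which exactly the
coordinates in `s` vanish has codimension `s.card`, and `α` has lattice distance `∑ i ∈ s, α i`
to it. -/
def bubbleNodes (k : ℕ) (r : ℕ → ℤ) : Set (ι → ℕ) :=
  {α | ∑ i, α i = k ∧ ∀ s : Finset ι, s.Nonempty → s ≠ Finset.univ →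
    r s.card < (∑ i ∈ s, α i : ℕ)}

theorem pos_of_mem_bubbleNodes [Nontrivial ι] (hr : 0 ≤ r 1) (hα : α ∈ bubbleNodes k r) (i : ι) :
    0 < α i := by
  have hi := hα.2 {i} (Finset.singleton_nonempty i) (Finset.singleton_ne_univ i)
  rw [Finset.card_singleton, Finset.sum_singleton] at hi
  omega

variable [DecidableEq ι]

theorem sub_single_mem_bubbleNodes (hα : α ∈ bubbleNodes (k + 1) r) {i : ι} (hi : 0 < α i) :
    α - Pi.single i 1 ∈ bubbleNodes k fun m => r m - 1 := by
  obtain ⟨hsum, hlt⟩ := hα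
  rw [← sub_single_add_single hi] at hsum hlt
  refine ⟨?_, fun s hs hs' => ?_⟩
  · rw [sum_add_single, if_pos (Finset.mem_univ i)] at hsum
    exact Nat.succ_injective hsum
  · have := hlt s hs hs'
    rw [sum_add_single] at this
    split_ifs at this <;> grind

theorem balancingClosed_bubbleNodes (k : ℕ) (r : ℕ → ℤ) :
    BalancingClosed (bubbleNodes k r : Set (ι → ℕ)) := by
  rintro α ⟨hsum, hlt⟩ i j hji
  have hi : 0 < α i := Nat.zero_lt_of_lt hji
  refine ⟨(sum_transfer hi j).trans hsum, fun s hs hs' => ?_⟩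
  have hlower : ∑ l ∈ s, (α - Pi.single i 1 : ι → ℕ) l + (if i ∈ s then 1 else 0) =
      ∑ l ∈ s, α l := by
    rw [← sum_add_single, sub_single_add_single hi]
  rw [sum_add_single]
  by_cases hij : i ∈ s ∧ j ∉ s
  · -- Exchanging `i` for `j` in `s` gives a face of the same dimension strictly closer to `α`.
    obtain ⟨his, hjs⟩ := hij
    let s' := insert j (s.erase i)
    have hjs' : j ∉ s.erase i := fun h => hjs (Finset.mem_of_mem_erase h)
    have his' : i ∉ s' := by simp [s', ne_of_mem_of_not_mem his hjs]
    have hcard : s'.card = s.card := by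
      rw [Finset.card_insert_of_notMem hjs', Finset.card_erase_add_one his]
    have hexchange := hlt s' (Finset.insert_nonempty _ _) fun h => his' (h ▸ Finset.mem_univ i)
    rw [hcard, Finset.sum_insert hjs'] at hexchange
    rw [if_pos his, ← Finset.add_sum_erase s α his] at hlower
    rw [if_neg hjs]
    omega
  · have := hlt s hs hs'
    grind

/-- If raising the smallest entry `i` left `∑ l ∈ s, β l` at the threshold `r s.card`, then the
average over `insert i s` would be too small. -/
theorem add_single_mem_bubbleNodes
    (hr : ∀ m, 0 < m → m + 1 < Fintype.card ι → (m + 1) * r m < m * r (m + 1))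
    (hk : ∀ m, m + 1 = Fintype.card ι → (m + 1) * r m < m * k)
    (hβ : β ∈ bubbleNodes k fun m => r m - 1) {i : ι} (hi : ∀ j, β i ≤ β j) :
    β + Pi.single i 1 ∈ bubbleNodes (k + 1) r := by
  obtain ⟨hsum, hlt⟩ := hβ
  refine ⟨by rw [sum_add_single, hsum, if_pos (Finset.mem_univ i)], fun s hs hs' => ?_⟩
  have hle : r s.card ≤ (∑ l ∈ s, β l : ℕ) := by linarith [hlt s hs hs']
  rw [sum_add_single]
  by_cases his : i ∈ s
  · rw [if_pos his]
    push_cast at hle ⊢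
    linarith
  rw [if_neg his, add_zero]
  refine hle.lt_of_ne fun heq => ?_
  have hcard : (insert i s).card = s.card + 1 := Finset.card_insert_of_notMem his
  have havg : (s.card : ℤ) * (∑ l ∈ insert i s, β l : ℕ) ≤ (s.card + 1) * r s.card := by
    rw [heq]
    exact_mod_cast card_mul_sum_insert_le hi his
  rcases eq_or_ne (insert i s) Finset.univ with huniv | huniv
  · rw [huniv, hsum] at havg
    exact (hk s.card (by rw [← hcard, huniv, Finset.card_univ])).not_ge havg
  · have hins := hlt _ (Finset.insert_nonempty i s) huniv
    rw [hcard] at hins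
    have hthr := hr s.card hs.card_pos (hcard ▸ (Finset.card_lt_iff_ne_univ _).2 huniv)
    nlinarith

theorem apply_eq_apply_of_mem_bubbleNodes
    (hr : ∀ m, 0 < m → m + 1 < Fintype.card ι → (m + 1) * r m < m * r (m + 1))
    (hk : ∀ m, m + 1 = Fintype.card ι → (m + 1) * r m < m * k) [Nonempty ι]
    {X : Type*} {g : (ι → ℕ) → X}
    (hg : ∀ α ∈ bubbleNodes (k + 1) r, ∀ i j, g (α - Pi.single i 1) = g (α - Pi.single j 1))
    {γ : ι → ℕ} (hβ : β ∈ bubbleNodes k fun m => r m - 1)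
    (hγ : γ ∈ bubbleNodes k fun m => r m - 1) : g β = g γ := by
  obtain ⟨i, hi⟩ := Finite.exists_min β
  obtain ⟨j, hj⟩ := Finite.exists_min γ
  have hβi := add_single_mem_bubbleNodes hr hk hβ hi
  have hγj := add_single_mem_bubbleNodes hr hk hγ hj
  simpa only [add_tsub_cancel_right] using
    (balancingClosed_bubbleNodes _ _).apply_sub_single_eq hg hβi hγj (hβi.1.trans hγj.1.symm) i j

end BubbleNodes

section Integral

theorem exists_mem_frontier_of_isPreconnected {X : Type*} [TopologicalSpace X] {s T : Set X}
    (hs : IsPreconnected s) (hsT : (s ∩ T).Nonempty) (hnot : ¬s ⊆ T) : ∃ z ∈ s, z ∈ frontier T := by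
  by_contra! hfr
  obtain ⟨x, hxs, hxT⟩ := hsT
  have hint {z : X} (hzs : z ∈ s) (hz : z ∈ closure T) : z ∈ interior T := by
    by_contra hzT
    exact hfr z hzs ⟨hz, hzT⟩
  have hsub : s ⊆ interior T :=
    hs.subset_of_closure_inter_subset isOpen_interior ⟨x, hxs, hint hxs (subset_closure hxT)⟩
      fun z ⟨hz, hzs⟩ => hint hzs (closure_mono interior_subset hz)
  exact hnot (hsub.trans interior_subset)

variable {E : Type*} [NormedAddCommGroup E] [NormedSpace ℝ E] {T : Set E}

theorem lipschitzWith_indicator_of_eq_zero_on_frontier {F : Type*} [SeminormedAddCommGroup F]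
    {f : E → F} {C : NNReal} (hT : IsClosed T) (hf : LipschitzOnWith C f T)
    (hzero : ∀ x ∈ frontier T, f x = 0) : LipschitzWith C (T.indicator f) := by
  have hcross {x y : E} (hx : x ∈ T) (hy : y ∉ T) : dist (f x) 0 ≤ C * dist x y := by
    obtain ⟨z, hz, hzT⟩ := exists_mem_frontier_of_isPreconnected (convex_segment x y).isPreconnected
      ⟨x, left_mem_segment ℝ x y, hx⟩ fun h => hy (h (right_mem_segment ℝ x y))
    have hxz : dist x z ≤ dist x y := by
      linarith [dist_add_dist_of_mem_segment hz, dist_nonneg (x := z) (y := y)]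
    calc dist (f x) 0 = dist (f x) (f z) := by rw [hzero z hzT]
      _ ≤ C * dist x z := hf.dist_le_mul x hx z (hT.frontier_subset hzT)
      _ ≤ C * dist x y := by gcongr
  refine LipschitzWith.of_dist_le_mul fun x y => ?_
  by_cases hx : x ∈ T <;> by_cases hy : y ∈ T
  · simpa only [Set.indicator_of_mem, hx, hy] using hf.dist_le_mul x hx y hy
  · simpa only [Set.indicator_of_mem hx, Set.indicator_of_notMem hy] using hcross hx hy
  · simpa only [Set.indicator_of_notMem hx, Set.indicator_of_mem hy, dist_comm] using hcross hy hx
  · rw [Set.indicator_of_notMem hx, Set.indicator_of_notMem hy, dist_self]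
    positivity

theorem lineDeriv_const_eq_zero (c : ℝ) (x t : E) : lineDeriv ℝ (fun _ => c) x t = 0 := by
  simp only [lineDeriv, deriv_const]

theorem lineDeriv_indicator_of_notMem_frontier {f : E → ℝ} {x : E} (hf : DifferentiableAt ℝ f x)
    (hx : x ∉ frontier T) (t : E) :
    lineDeriv ℝ (T.indicator f) x t = T.indicator (fun y => fderiv ℝ f y t) x := by
  by_cases hxT : x ∈ T
  · have hmem : T ∈ nhds x := by
      by_contra h
      exact hx ⟨subset_closure hxT, fun hint => h (mem_interior_iff_mem_nhds.1 hint)⟩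
    have heq : T.indicator f =ᶠ[nhds x] f :=
      Filter.mem_of_superset hmem fun y hy => Set.indicator_of_mem hy f
    rw [heq.lineDeriv_eq, hf.lineDeriv_eq_fderiv, Set.indicator_of_mem hxT]
  · have hmem : Tᶜ ∈ nhds x := by
      rw [← mem_interior_iff_mem_nhds, interior_compl]
      exact fun hcl => hx ⟨hcl, fun hint => hxT (interior_subset hint)⟩
    have heq : T.indicator f =ᶠ[nhds x] fun _ => 0 :=
      Filter.mem_of_superset hmem fun y hy => Set.indicator_of_notMem hy f
    rw [heq.lineDeriv_eq, lineDeriv_const_eq_zero, Set.indicator_of_notMem hxT]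

variable [FiniteDimensional ℝ E] [MeasurableSpace E] [BorelSpace E]
  (μ : Measure E) [μ.IsAddHaarMeasure]

theorem integral_lineDeriv_eq_zero_of_lipschitzWith {g : E → ℝ} {C : NNReal}
    (hg : LipschitzWith C g) (hsupp : HasCompactSupport g) (t : E) :
    ∫ x, lineDeriv ℝ g x t ∂μ = 0 := by
  have h := (LipschitzWith.const (1 : ℝ)).integral_lineDeriv_mul_eq (μ := μ) hg hsupp (-t)
  simpa only [lineDeriv_const_eq_zero, neg_neg, zero_mul, mul_one, integral_zero] using h.symm

theorem setIntegral_fderiv_eq_zero_of_eq_zero_on_frontier (hT : IsCompact T)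
    (hfr : μ (frontier T) = 0) {f : E → ℝ} (hf : ContDiff ℝ 1 f)
    (hzero : ∀ x ∈ frontier T, f x = 0) (t : E) : ∫ x in T, fderiv ℝ f x t ∂μ = 0 := by
  obtain ⟨C, hC⟩ :=
    hf.locallyLipschitz.locallyLipschitzOn.exists_lipschitzOnWith_of_compact hT
  have hlip := lipschitzWith_indicator_of_eq_zero_on_frontier hT.isClosed hC hzero
  have hsupp : HasCompactSupport (T.indicator f) :=
    HasCompactSupport.intro hT fun x hx => Set.indicator_of_notMem hx f
  calc ∫ x in T, fderiv ℝ f x t ∂μ = ∫ x, T.indicator (fun y => fderiv ℝ f y t) x ∂μ :=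
        (integral_indicator hT.measurableSet).symm
    _ = ∫ x, lineDeriv ℝ (T.indicator f) x t ∂μ := by
        refine integral_congr_ae ?_
        filter_upwards [measure_eq_zero_iff_ae_notMem.1 hfr] with x hx
        exact (lineDeriv_indicator_of_notMem_frontier
          (hf.differentiable one_ne_zero).differentiableAt hx t).symm
    _ = 0 := integral_lineDeriv_eq_zero_of_lipschitzWith μ hlip hsupp t

end Integral

section Simplex

variable {ι : Type*} {E : Type*} [NormedAddCommGroup E] [NormedSpace ℝ E]

theorem isCompact_simplex [Finite ι] (b : AffineBasis ι ℝ E) :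
    IsCompact (convexHull ℝ (Set.range b)) :=
  (Set.finite_range b).isCompact_convexHull (𝕜 := ℝ)

theorem exists_coord_eq_zero_of_mem_frontier [Finite ι] {b : AffineBasis ι ℝ E} {x : E}
    (hx : x ∈ frontier (convexHull ℝ (Set.range b))) : ∃ i, b.coord i x = 0 := by
  have hnonneg := (isCompact_simplex b).isClosed.frontier_subset hx
  have hpos := hx.2
  rw [b.convexHull_eq_nonneg_coord] at hnonneg
  rw [b.interior_convexHull, Set.mem_ofPred_eq, not_forall] at hpos
  obtain ⟨i, hi⟩ := hpos
  exact ⟨i, le_antisymm (not_lt.1 hi) (hnonneg i)⟩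

theorem linear_coord_sub [DecidableEq ι] (b : AffineBasis ι ℝ E) (l i j : ι) :
    (b.coord l).linear (b i - b j) = (if l = i then 1 else 0) - if l = j then 1 else 0 := by
  rw [← vsub_eq_sub, AffineMap.linearMap_vsub, b.coord_apply, b.coord_apply, vsub_eq_sub]

theorem hasFDerivAt_coord [FiniteDimensional ℝ E] (b : AffineBasis ι ℝ E) (i : ι) (x : E) :
    HasFDerivAt (b.coord i) (LinearMap.toContinuousLinearMap (b.coord i).linear) x :=
  ContinuousAffineMap.hasFDerivAt ⟨b.coord i, (b.coord i).continuous_of_finiteDimensional⟩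

end Simplex

section Bernstein

variable {ι : Type*} [Fintype ι] {E : Type*} [NormedAddCommGroup E] [NormedSpace ℝ E]

/-- The Bernstein monomial `λ ^ α / α!` in the barycentric coordinates `λ` of `b`. Dividing by `α!`
makes differentiation lower the indices without producing coefficients. -/
noncomputable def dividedBernstein (b : AffineBasis ι ℝ E) (α : ι → ℕ) (x : E) : ℝ :=
  ∏ i, b.coord i x ^ α i / (α i).factorial

/-- The space of polynomial functions spanned by the Bernstein monomials with indices in `S`. -/
noncomputable def bernsteinSpan (b : AffineBasis ι ℝ E) (S : Set (ι → ℕ)) :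
    Submodule ℝ (E → ℝ) :=
  Submodule.span ℝ (dividedBernstein b '' S)

variable {b : AffineBasis ι ℝ E} {S : Set (ι → ℕ)} {α : ι → ℕ} {f : E → ℝ} {x : E}

theorem dividedBernstein_mem_bernsteinSpan (hα : α ∈ S) :
    dividedBernstein b α ∈ bernsteinSpan b S :=
  Submodule.subset_span (Set.mem_image_of_mem _ hα)

theorem dividedBernstein_nonneg (hx : ∀ i, 0 ≤ b.coord i x) : 0 ≤ dividedBernstein b α x :=
  Finset.prod_nonneg fun i _ => div_nonneg (pow_nonneg (hx i) _) (Nat.cast_nonneg _)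

theorem dividedBernstein_pos (hx : ∀ i, 0 < b.coord i x) : 0 < dividedBernstein b α x :=
  Finset.prod_pos fun i _ => div_pos (pow_pos (hx i) _) (Nat.cast_pos.2 (Nat.factorial_pos _))

theorem eq_zero_of_mem_bernsteinSpan (hS : ∀ α ∈ S, ∀ i, 0 < α i) (hf : f ∈ bernsteinSpan b S)
    {i : ι} (hx : b.coord i x = 0) : f x = 0 := by
  induction hf using Submodule.span_induction with
  | mem f hf =>
    obtain ⟨α, hα, rfl⟩ := hf
    refine Finset.prod_eq_zero (Finset.mem_univ i) ?_
    rw [hx, zero_pow (hS α hα i).ne', zero_div]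
  | zero => rfl
  | add f g _ _ hf hg => rw [Pi.add_apply, hf, hg, add_zero]
  | smul c f _ hf => rw [Pi.smul_apply, hf, smul_zero]

variable [FiniteDimensional ℝ E]

theorem contDiff_of_mem_bernsteinSpan {n : WithTop ℕ∞} (hf : f ∈ bernsteinSpan b S) :
    ContDiff ℝ n f := by
  induction hf using Submodule.span_induction with
  | mem f hf =>
    obtain ⟨α, -, rfl⟩ := hf
    exact contDiff_prod fun i _ => (((smooth_barycentric_coord b i).of_le le_top).pow _).div_const _
  | zero => exact contDiff_const
  | add f g _ _ hf hg => exact hf.add hg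
  | smul c f _ hf => exact hf.const_smul c

theorem differentiable_of_mem_bernsteinSpan : ∀ f ∈ bernsteinSpan b S, Differentiable ℝ f :=
  fun _ hf => (contDiff_of_mem_bernsteinSpan hf).differentiable one_ne_zero

theorem hasDerivAt_pow_div_factorial {n : ℕ} (hn : 0 < n) (y : ℝ) :
    HasDerivAt (fun z : ℝ => z ^ n / n.factorial) (y ^ (n - 1) / (n - 1).factorial) y := by
  have hfac : (n.factorial : ℝ) = n * (n - 1).factorial := by
    exact_mod_cast (Nat.mul_factorial_pred hn.ne').symm
  have h := (hasDerivAt_pow n y).div_const (n.factorial : ℝ)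
  rw [hfac] at h ⊢
  rwa [mul_div_mul_left _ _ (Nat.cast_ne_zero.2 hn.ne')] at h

variable [DecidableEq ι]

theorem fderiv_dividedBernstein_apply (hα : ∀ i, 0 < α i) (x t : E) :
    fderiv ℝ (dividedBernstein b α) x t =
      ∑ i, (b.coord i).linear t * dividedBernstein b (α - Pi.single i 1) x := by
  have hprod : HasFDerivAt (dividedBernstein b α) _ x := HasFDerivAt.finsetProd fun i _ =>
    (hasDerivAt_pow_div_factorial (hα i) (b.coord i x)).comp_hasFDerivAt x (hasFDerivAt_coord b i x)
  have hlower (i : ι) : dividedBernstein b (α - Pi.single i 1) x =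
      (∏ j ∈ Finset.univ.erase i, b.coord j x ^ α j / (α j).factorial) *
        (b.coord i x ^ (α i - 1) / (α i - 1).factorial) := by
    rw [dividedBernstein, ← Finset.prod_erase_mul _ _ (Finset.mem_univ i)]
    congr 1
    · refine Finset.prod_congr rfl fun j hj => ?_
      rw [Pi.sub_apply, Pi.single_eq_of_ne (Finset.ne_of_mem_erase hj), tsub_zero]
    · rw [Pi.sub_apply, Pi.single_eq_same]
  rw [hprod.fderiv, _root_.sum_apply]
  refine Finset.sum_congr rfl fun i _ => ?_
  rw [hlower, _root_.smul_apply, _root_.smul_apply, smul_eq_mul, smul_eq_mul,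
    LinearMap.coe_toContinuousLinearMap']
  ring

theorem fderiv_dividedBernstein_edge (hα : ∀ i, 0 < α i) (i j : ι) :
    (fun x => fderiv ℝ (dividedBernstein b α) x (b i - b j)) =
      dividedBernstein b (α - Pi.single i 1) - dividedBernstein b (α - Pi.single j 1) := by
  ext x
  simp only [fderiv_dividedBernstein_apply hα, linear_coord_sub, sub_mul, ite_mul, one_mul,
    zero_mul, Finset.sum_sub_distrib, Finset.sum_ite_eq', Finset.mem_univ, if_true, Pi.sub_apply]

theorem fderiv_mem_bernsteinSpan {S' : Set (ι → ℕ)} (hS : ∀ α ∈ S, ∀ i, 0 < α i)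
    (hS' : ∀ α ∈ S, ∀ i, α - Pi.single i 1 ∈ S') (hf : f ∈ bernsteinSpan b S) (t : E) :
    (fun x => fderiv ℝ f x t) ∈ bernsteinSpan b S' := by
  have hdiff : ∀ f ∈ bernsteinSpan b S, Differentiable ℝ f := differentiable_of_mem_bernsteinSpan
  induction hf using Submodule.span_induction with
  | mem f hf =>
    obtain ⟨α, hα, rfl⟩ := hf
    have heq : (fun x => fderiv ℝ (dividedBernstein b α) x t) =
        ∑ i, (b.coord i).linear t • dividedBernstein b (α - Pi.single i 1) := by
      ext x
      simp only [fderiv_dividedBernstein_apply (hS α hα), Finset.sum_apply, Pi.smul_apply,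
        smul_eq_mul]
    rw [heq]
    exact Submodule.sum_mem _ fun i _ =>
      Submodule.smul_mem _ _ (dividedBernstein_mem_bernsteinSpan (hS' α hα i))
  | zero =>
    simp only [fderiv_zero, Pi.zero_apply, _root_.zero_apply]
    exact Submodule.zero_mem _
  | add f g hf hg ihf ihg =>
    simp only [fderiv_add (hdiff f hf _) (hdiff g hg _), _root_.add_apply]
    exact Submodule.add_mem _ ihf ihg
  | smul c f hf ihf =>
    simp only [fderiv_const_smul (hdiff f hf _), _root_.smul_apply]
    exact Submodule.smul_mem _ c ihf

end Bernstein

section SimplexIntegral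

variable {ι : Type*} [Fintype ι] {E : Type*} [NormedAddCommGroup E] [NormedSpace ℝ E]
  [FiniteDimensional ℝ E] [MeasurableSpace E] [BorelSpace E] (μ : Measure E)
  {b : AffineBasis ι ℝ E}

theorem integrableOn_of_mem_bernsteinSpan [IsFiniteMeasureOnCompacts μ] {S : Set (ι → ℕ)}
    {f : E → ℝ} (hf : f ∈ bernsteinSpan b S) : IntegrableOn f (convexHull ℝ (Set.range b)) μ :=
  (contDiff_of_mem_bernsteinSpan hf (n := 0)).continuous.continuousOn.integrableOn_compact
    (isCompact_simplex b)

theorem setIntegral_dividedBernstein_pos [μ.IsAddHaarMeasure] (b : AffineBasis ι ℝ E)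
    (α : ι → ℕ) : 0 < ∫ x in convexHull ℝ (Set.range b), dividedBernstein b α x ∂μ := by
  have hint : IntegrableOn (dividedBernstein b α) (convexHull ℝ (Set.range b)) μ :=
    integrableOn_of_mem_bernsteinSpan μ (dividedBernstein_mem_bernsteinSpan (Set.mem_singleton α))
  have hnonneg : ∀ᵐ x ∂μ.restrict (convexHull ℝ (Set.range b)), 0 ≤ dividedBernstein b α x := by
    refine ae_restrict_of_forall_mem (isCompact_simplex b).measurableSet fun x hx => ?_
    rw [b.convexHull_eq_nonneg_coord] at hx
    exact dividedBernstein_nonneg hx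
  rw [setIntegral_pos_iff_support_of_nonneg_ae hnonneg hint]
  have hne : (interior (convexHull ℝ (Set.range b))).Nonempty :=
    ⟨_, b.centroid_mem_interior_convexHull⟩
  refine (isOpen_interior.measure_pos μ hne).trans_le (measure_mono fun x hx => ?_)
  refine ⟨?_, interior_subset hx⟩
  rw [b.interior_convexHull] at hx
  exact (dividedBernstein_pos hx).ne'

theorem setIntegral_fderiv_eq_zero_of_mem_bernsteinSpan [μ.IsAddHaarMeasure] {S : Set (ι → ℕ)}
    (hS : ∀ α ∈ S, ∀ i, 0 < α i) {f : E → ℝ} (hf : f ∈ bernsteinSpan b S) (t : E) :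
    ∫ x in convexHull ℝ (Set.range b), fderiv ℝ f x t ∂μ = 0 := by
  refine setIntegral_fderiv_eq_zero_of_eq_zero_on_frontier μ (isCompact_simplex b)
    ((convex_convexHull ℝ _).addHaar_frontier μ) (contDiff_of_mem_bernsteinSpan hf)
    (fun x hx => ?_) t
  obtain ⟨i, hi⟩ := exists_coord_eq_zero_of_mem_frontier hx
  exact eq_zero_of_mem_bernsteinSpan hS hf hi

end SimplexIntegral

section Divergence

variable {κ : Type*} [Fintype κ] [DecidableEq κ]

/-- The divergence of a vector field on `ℝ^κ`. -/
noncomputable def divergence (u : (κ → ℝ) → κ → ℝ) (x : κ → ℝ) : ℝ :=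
  ∑ m, fderiv ℝ (fun y => u y m) x (Pi.single m 1)

/-- The space of divergences of vector fields with components in a space `V` of differentiable
functions. -/
noncomputable def divergenceRange (V : Submodule ℝ ((κ → ℝ) → ℝ))
    (hV : ∀ f ∈ V, Differentiable ℝ f) : Submodule ℝ ((κ → ℝ) → ℝ) where
  carrier := {p | ∃ u : (κ → ℝ) → κ → ℝ, (∀ m, (fun x => u x m) ∈ V) ∧ p = divergence u}
  zero_mem' := by
    refine ⟨0, fun _ => V.zero_mem, funext fun x => ?_⟩
    simp only [divergence, Pi.zero_apply, fderiv_const_apply, _root_.zero_apply,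
      Finset.sum_const_zero]
  add_mem' := by
    rintro _ _ ⟨u, hu, rfl⟩ ⟨w, hw, rfl⟩
    refine ⟨u + w, fun m => V.add_mem (hu m) (hw m), funext fun x => ?_⟩
    simp only [divergence, Pi.add_apply, ← Finset.sum_add_distrib]
    refine Finset.sum_congr rfl fun m _ => ?_
    rw [fderiv_fun_add (hV _ (hu m) x) (hV _ (hw m) x), _root_.add_apply]
  smul_mem' := by
    rintro c _ ⟨u, hu, rfl⟩
    refine ⟨c • u, fun m => V.smul_mem c (hu m), funext fun x => ?_⟩
    simp only [divergence, Pi.smul_apply, Finset.smul_sum]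
    refine Finset.sum_congr rfl fun m _ => ?_
    rw [fderiv_fun_const_smul (hV _ (hu m) x), _root_.smul_apply]

theorem fderiv_mem_divergenceRange {V : Submodule ℝ ((κ → ℝ) → ℝ)}
    (hV : ∀ f ∈ V, Differentiable ℝ f) {f : (κ → ℝ) → ℝ} (hf : f ∈ V) (t : κ → ℝ) :
    (fun x => fderiv ℝ f x t) ∈ divergenceRange V hV := by
  refine ⟨fun x m => t m * f x, fun m => V.smul_mem (t m) hf, funext fun x => ?_⟩
  calc fderiv ℝ f x t = ∑ m, t m * fderiv ℝ f x (Pi.single m 1) := by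
        conv_lhs => rw [pi_eq_sum_univ' t]
        simp only [map_sum, map_smul, smul_eq_mul]
    _ = divergence (fun x m => t m * f x) x := by
        simp only [divergence, fderiv_const_mul (hV f hf x), _root_.smul_apply, smul_eq_mul]

end Divergence

section BubbleStability

variable {ι κ : Type*} [Fintype ι] [Fintype κ] [DecidableEq κ] {S : Set (ι → ℕ)}
  {b : AffineBasis ι ℝ (κ → ℝ)}

theorem setIntegral_divergence_eq_zero (hS : ∀ α ∈ S, ∀ i, 0 < α i) {u : (κ → ℝ) → κ → ℝ}
    (hu : ∀ m, (fun x => u x m) ∈ bernsteinSpan b S) :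
    ∫ x in convexHull ℝ (Set.range b), divergence u x = 0 := by
  have hint (m : κ) : IntegrableOn (fun x => fderiv ℝ (fun y => u y m) x (Pi.single m 1))
      (convexHull ℝ (Set.range b)) :=
    (((contDiff_of_mem_bernsteinSpan (hu m)).continuous_fderiv one_ne_zero).clm_apply
      continuous_const).continuousOn.integrableOn_compact (isCompact_simplex b)
  simp only [divergence]
  rw [integral_finsetSum _ fun m _ => hint m]
  exact Finset.sum_eq_zero fun m _ =>
    setIntegral_fderiv_eq_zero_of_mem_bernsteinSpan volume hS (hu m) _

theorem mem_divergenceRange_of_setIntegral_eq_zero (hS : ∀ α ∈ S, ∀ i, 0 < α i)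
    {γ : ι → ℕ} {p : (κ → ℝ) → ℝ}
    (hp : p ∈ divergenceRange (bernsteinSpan b S) differentiable_of_mem_bernsteinSpan ⊔
      ℝ ∙ dividedBernstein b γ)
    (hint : IntegrableOn p (convexHull ℝ (Set.range b)))
    (hzero : ∫ x in convexHull ℝ (Set.range b), p x = 0) :
    p ∈ divergenceRange (bernsteinSpan b S) differentiable_of_mem_bernsteinSpan := by
  obtain ⟨q, hq, _, hc, rfl⟩ := Submodule.mem_sup.1 hp
  obtain ⟨c, rfl⟩ := Submodule.mem_span_singleton.1 hc
  have hγint : IntegrableOn (c • dividedBernstein b γ) (convexHull ℝ (Set.range b)) :=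
    (integrableOn_of_mem_bernsteinSpan volume
      (dividedBernstein_mem_bernsteinSpan (Set.mem_singleton γ))).smul c
  have hqint : IntegrableOn q (convexHull ℝ (Set.range b)) := by
    simpa only [add_sub_cancel_right] using hint.sub hγint
  have hqzero : ∫ x in convexHull ℝ (Set.range b), q x = 0 := by
    obtain ⟨u, hu, rfl⟩ := hq
    exact setIntegral_divergence_eq_zero hS hu
  have hmass : c * ∫ x in convexHull ℝ (Set.range b), dividedBernstein b γ x = 0 := by
    rw [integral_add' hqint hγint, hqzero, zero_add] at hzero
    simpa only [Pi.smul_apply, smul_eq_mul, integral_const_mul] using hzero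
  rcases mul_eq_zero.1 hmass with rfl | hmass
  · rwa [zero_smul, add_zero]
  · exact absurd hmass (setIntegral_dividedBernstein_pos volume b γ).ne'

theorem dividedBernstein_sub_mem_divergenceRange [DecidableEq ι] {α : ι → ℕ} (hα : α ∈ S)
    (hpos : ∀ i, 0 < α i) (i j : ι) :
    dividedBernstein b (α - Pi.single i 1) - dividedBernstein b (α - Pi.single j 1) ∈
      divergenceRange (bernsteinSpan b S) differentiable_of_mem_bernsteinSpan := by
  rw [← fderiv_dividedBernstein_edge hpos]
  exact fderiv_mem_divergenceRange _ (dividedBernstein_mem_bernsteinSpan hα) (b i - b j)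

theorem exists_bernsteinSpan_le_sup_span_singleton [DecidableEq ι] {E : Type*}
    [NormedAddCommGroup E] [NormedSpace ℝ E] (b : AffineBasis ι ℝ E) {k : ℕ} {r : ℕ → ℤ}
    (hr : ∀ m, 0 < m → m + 1 < Fintype.card ι → (m + 1) * r m < m * r (m + 1))
    (hk : ∀ m, m + 1 = Fintype.card ι → (m + 1) * r m < m * k) {W : Submodule ℝ (E → ℝ)}
    (hW : ∀ α ∈ bubbleNodes (k + 1) r, ∀ i j,
      dividedBernstein b (α - Pi.single i 1) - dividedBernstein b (α - Pi.single j 1) ∈ W) :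
    ∃ γ, bernsteinSpan b (bubbleNodes k fun m => r m - 1) ≤ W ⊔ ℝ ∙ dividedBernstein b γ := by
  have := b.nonempty
  rcases (bubbleNodes k fun m => r m - 1 : Set (ι → ℕ)).eq_empty_or_nonempty with hempty | ⟨γ, hγ⟩
  · refine ⟨0, ?_⟩
    rw [hempty, bernsteinSpan, Set.image_empty, Submodule.span_empty]
    exact bot_le
  refine ⟨γ, Submodule.span_le.2 ?_⟩
  rintro _ ⟨β, hβ, rfl⟩
  have hmod : W.mkQ (dividedBernstein b β) = W.mkQ (dividedBernstein b γ) :=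
    apply_eq_apply_of_mem_bubbleNodes hr hk (g := fun δ => W.mkQ (dividedBernstein b δ))
      (fun α hα i j => (Submodule.Quotient.eq W).2 (hW α hα i j)) hβ hγ
  rw [← sub_add_cancel (dividedBernstein b β) (dividedBernstein b γ)]
  exact Submodule.add_mem_sup ((Submodule.Quotient.eq W).1 hmod)
    (Submodule.mem_span_singleton_self _)

theorem divergence_mem_bernsteinSpan [DecidableEq ι] {S' : Set (ι → ℕ)}
    (hS : ∀ α ∈ S, ∀ i, 0 < α i) (hS' : ∀ α ∈ S, ∀ i, α - Pi.single i 1 ∈ S') {u : (κ → ℝ) → κ → ℝ}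
    (hu : ∀ m, (fun x => u x m) ∈ bernsteinSpan b S) : divergence u ∈ bernsteinSpan b S' := by
  have hsum : divergence u = ∑ m, fun x => fderiv ℝ (fun y => u y m) x (Pi.single m 1) := by
    ext x
    rw [divergence, Finset.sum_apply]
  rw [hsum]
  exact Submodule.sum_mem _ fun m _ => fderiv_mem_bernsteinSpan hS hS' (hu m) _

/-- With `r (card ι) = k` on the whole simplex, `hr` and `hk` say that `r m / m` strictly increases
with the codimension `m`. -/
theorem div_bubble_stability_general [Nontrivial ι] (b : AffineBasis ι ℝ (κ → ℝ)) (r : ℕ → ℤ)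
    (k : ℕ) (hr₁ : 0 ≤ r 1)
    (hr : ∀ m, 0 < m → m + 1 < Fintype.card ι → (m + 1) * r m < m * r (m + 1))
    (hk : ∀ m, m + 1 = Fintype.card ι → (m + 1) * r m < m * k) :
    {p | ∃ u : (κ → ℝ) → κ → ℝ,
        (∀ m, (fun x => u x m) ∈ bernsteinSpan b (bubbleNodes (k + 1) r)) ∧ p = divergence u} =
      {p | p ∈ bernsteinSpan b (bubbleNodes k fun m => r m - 1) ∧
        ∫ x in convexHull ℝ (Set.range b), p x = 0} := by
  classical
  have hpos : ∀ α ∈ bubbleNodes (k + 1) r, ∀ i : ι, 0 < α i := fun α hα =>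
    pos_of_mem_bubbleNodes hr₁ hα
  ext p
  constructor
  · rintro ⟨u, hu, rfl⟩
    exact ⟨divergence_mem_bernsteinSpan hpos
      (fun α hα i => sub_single_mem_bubbleNodes hα (hpos α hα i)) hu,
      setIntegral_divergence_eq_zero hpos hu⟩
  · rintro ⟨hp, hzero⟩
    obtain ⟨γ, hγ⟩ := exists_bernsteinSpan_le_sup_span_singleton b hr hk fun α hα =>
      dividedBernstein_sub_mem_divergenceRange hα (hpos α hα)
    exact mem_divergenceRange_of_setIntegral_eq_zero hpos (hγ hp)
      (integrableOn_of_mem_bernsteinSpan volume hp) hzero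

end BubbleStability

section Tetrahedron

theorem exists_affineBasis_coord_eq {ι 𝕜 V P : Type*} [Fintype ι] [DecidableEq ι] [DivisionRing 𝕜]
    [AddCommGroup V] [Module 𝕜 V] [FiniteDimensional 𝕜 V] [AddTorsor V P] {v : ι → P}
    (hv : AffineIndependent 𝕜 v) (hcard : Fintype.card ι = Module.finrank 𝕜 V + 1)
    {lam : ι → P →ᵃ[𝕜] 𝕜} (hlam : ∀ i j, lam i (v j) = if i = j then 1 else 0) :
    ∃ b : AffineBasis ι 𝕜 P, ⇑b = v ∧ b.coord = lam := by
  let b : AffineBasis ι 𝕜 P := ⟨v, hv, hv.affineSpan_eq_top_iff_card_eq_finrank_add_one.2 hcard⟩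
  refine ⟨b, rfl, funext fun i => AffineMap.ext_on b.tot ?_⟩
  rintro _ ⟨j, rfl⟩
  exact (b.coord_apply i j).trans (hlam i j).symm

/-- The smoothness vector `(r^v, r^e, r^f)` of a tetrahedron, indexed by the codimension of the
subsimplices: faces have codimension `1`, edges `2` and vertices `3`. -/
def codimSmoothness (rv re rf : ℤ) : ℕ → ℤ
  | 1 => rf
  | 2 => re
  | _ => rv

theorem codimSmoothness_sub_one (rv re rf : ℤ) :
    codimSmoothness (rv - 1) (re - 1) (rf - 1) = fun m => codimSmoothness rv re rf m - 1 := by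
  funext m
  unfold codimSmoothness
  split <;> rfl

theorem interiorLattice_eq_bubbleNodes (k : ℕ) (rv re rf : ℤ) :
    interiorLattice k rv re rf = bubbleNodes k (codimSmoothness rv re rf) := by
  ext α
  refine and_congr_right fun _ => Iff.trans (forall_congr' fun f => ?_)
    (compl_surjective (α := Finset (Fin 4))).forall.symm
  have hproper : fᶜ ≠ Finset.univ ↔ f.Nonempty := by
    rw [Ne, Finset.compl_eq_univ_iff, Finset.nonempty_iff_ne_empty]
  have hnonempty : fᶜ.Nonempty ↔ f ≠ Finset.univ := by
    rw [Finset.nonempty_iff_ne_empty, Ne, Finset.compl_eq_empty_iff]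
  rw [hproper, hnonempty, imp.swap]
  refine forall₂_congr fun hf' hf => ?_
  have hpos := hf.card_pos
  have hlt : f.card < 4 := (Finset.card_lt_iff_ne_univ f).2 hf'
  rw [Finset.card_compl, Fintype.card_fin, Nat.cast_sum]
  interval_cases f.card <;> simp [codimSmoothness]

theorem bernBary3_eq_smul_dividedBernstein (b : AffineBasis (Fin 4) ℝ (Fin 3 → ℝ))
    (α : Fin 4 → ℕ) :
    bernBary3 b.coord α = (∏ i, ((α i).factorial : ℝ)) • dividedBernstein b α := by
  ext x
  simp only [bernBary3, dividedBernstein, Pi.smul_apply, smul_eq_mul, ← Finset.prod_mul_distrib]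
  exact Finset.prod_congr rfl fun i _ =>
    (mul_div_cancel₀ _ (Nat.cast_ne_zero.2 (Nat.factorial_ne_zero _))).symm

theorem bubbleSpace_eq_bernsteinSpan (b : AffineBasis (Fin 4) ℝ (Fin 3 → ℝ)) (k : ℕ)
    (rv re rf : ℤ) :
    bubbleSpace b.coord k rv re rf =
      bernsteinSpan b (bubbleNodes k (codimSmoothness rv re rf)) := by
  rw [← interiorLattice_eq_bubbleNodes]
  refine le_antisymm (Submodule.span_le.2 ?_) (Submodule.span_le.2 ?_) <;> rintro _ ⟨α, hα, rfl⟩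
  · rw [bernBary3_eq_smul_dividedBernstein]
    exact Submodule.smul_mem _ _ (dividedBernstein_mem_bernsteinSpan hα)
  · have hne : ∏ i, ((α i).factorial : ℝ) ≠ 0 :=
      Finset.prod_ne_zero_iff.2 fun i _ => Nat.cast_ne_zero.2 (Nat.factorial_ne_zero _)
    rw [SetLike.mem_coe, ← Submodule.smul_mem_iff _ hne, ← bernBary3_eq_smul_dividedBernstein]
    exact Submodule.subset_span (Set.mem_image_of_mem _ hα)

end Tetrahedron

/-- div stability of bubble spaces, `div 𝔹³_k(T; r₂) = 𝔹_{k−1}(T; r₃)/ℝ`,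
for `r₂ = (rᵛ, rᵉ, r^f)` with `r^f ≥ 0`, `rᵉ ≥ 2r^f + 1`, `rᵛ ≥ 2rᵉ`, `k ≥ 2rᵛ + 1`,
and `r₃ = r₂ − 1`, assuming `S₃(T, r₃, k−1) ≠ ∅`. -/
theorem div_bubble_stability
    (v : Fin 4 → (Fin 3 → ℝ)) (hv : AffineIndependent ℝ v)
    (lam : Fin 4 → ((Fin 3 → ℝ) →ᵃ[ℝ] ℝ))
    (hlam : ∀ i j, lam i (v j) = if i = j then 1 else 0)
    (hsum : ∀ x : Fin 3 → ℝ, ∑ i, lam i x = 1)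
    (rv re rf : ℤ) (hrf : 0 ≤ rf) (hre : 2 * rf + 1 ≤ re) (hrv : 2 * re ≤ rv)
    (k : ℕ) (hk : 2 * rv + 1 ≤ (k : ℤ))
    (hS : (interiorLattice (k - 1) (rv - 1) (re - 1) (rf - 1)).Nonempty) :
    {p : (Fin 3 → ℝ) → ℝ | ∃ u : (Fin 3 → ℝ) → (Fin 3 → ℝ),
        (∀ m : Fin 3, (fun x => u x m) ∈ bubbleSpace lam k rv re rf) ∧ p = diverg u}
      = {p : (Fin 3 → ℝ) → ℝ |
          p ∈ bubbleSpace lam (k - 1) (rv - 1) (re - 1) (rf - 1) ∧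
          (∫ x in convexHull ℝ (Set.range v), p x) = 0} := by
  obtain ⟨b, rfl, rfl⟩ := exists_affineBasis_coord_eq hv (by simp) hlam
  obtain ⟨n, rfl⟩ : ∃ n, k = n + 1 := Nat.exists_eq_succ_of_ne_zero (by omega)
  simp only [Nat.add_sub_cancel, bubbleSpace_eq_bernsteinSpan, codimSmoothness_sub_one]
  refine div_bubble_stability_general b (codimSmoothness rv re rf) n hrf (fun m hm hm' => ?_)
    fun m hm => ?_
  · rw [Fintype.card_fin] at hm'
    obtain rfl | rfl : m = 1 ∨ m = 2 := by omega
    all_goals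
      simp only [codimSmoothness]
      push_cast
      omega
  · rw [Fintype.card_fin] at hm
    obtain rfl : m = 3 := by omega
    simp only [codimSmoothness]
    push_cast at hk ⊢
    omega
end
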